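/- For every integer n ≥ 4 there exists an n-dimensional real normed space X such that for every (n-1)-dimensional subspace Y of X and every linear projection P : X → Y one has ‖P‖ > 1 + (2(n+3)²)^{-100(n+3)²}. -/

import Mathlib

/-- `X` is an `n`-dimensional normed space in which every linear projection onto every
`(n-1)`-dimensional subspace has norm greater than `1 + (2(n+3)²)^{-100(n+3)²}`. -/
def NoAlmostMinimalHyperplaneProjection (n : ℕ) (X : Type)
    [NormedAddCommGroup X] [NormedSpace ℝ X] : Prop :=
  Module.finrank ℝ X = n ∧
  ∀ Y : Submodule ℝ X, Module.finrank ℝ Y = n - 1 →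
    ∀ P : X →L[ℝ] X, (∀ x, P x ∈ Y) → (∀ y ∈ Y, P y = y) →
      1 + ((2 * ((n : ℝ) + 3) ^ 2) ^ (100 * (n + 3) ^ 2))⁻¹ < ‖P‖



lemma polar_zero {ι : Type*} [Fintype ι] [DecidableEq ι] (c : ι → ℝ) (k : ι) (hk : c k = 0) (d : ℕ) :
    ∑ S ∈ (Finset.univ : Finset ι).powerset, (-1 : ℝ) ^ S.card * (∑ j ∈ S, c j) ^ d = 0 := by
  have h : (Finset.univ : Finset ι) = insert k (Finset.univ.erase k) := by simp
  rw [h, Finset.sum_powerset_insert (Finset.notMem_erase k _), ← Finset.sum_add_distrib]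
  refine Finset.sum_eq_zero fun S hS => ?_
  have hkS : k ∉ S := fun hh => Finset.notMem_erase k _ (Finset.mem_powerset.mp hS hh)
  rw [Finset.card_insert_of_notMem hkS, Finset.sum_insert hkS, hk]
  ring

lemma polar_one (d : ℕ) :
    |∑ S ∈ (Finset.univ : Finset (Fin d)).powerset, (-1 : ℝ) ^ S.card * (S.card : ℝ) ^ d|
      = (d.factorial : ℝ) := by
  rw [Finset.sum_powerset_apply_card (fun m => (-1 : ℝ) ^ m * (m : ℝ) ^ d)]
  have h := congrFun (fwdDiff_iter_eq_factorial (R := ℝ) (n := d)) 0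
  rw [fwdDiff_iter_eq_sum_shift] at h
  have h2 : ∑ m ∈ Finset.range (d + 1), d.choose m • ((-1 : ℝ) ^ m * (m : ℝ) ^ d)
      = (-1) ^ d * (d.factorial : ℝ) := by
    have h' : ((d.factorial : ℕ) : ℝ → ℝ) 0 = (d.factorial : ℝ) := by simp
    rw [← h', ← h, Finset.mul_sum]
    refine Finset.sum_congr rfl fun m hm => ?_
    have hm' : m ≤ d := by simpa [Nat.lt_succ_iff] using hm
    have : (-1 : ℝ) ^ d * (-1) ^ (d - m) = (-1) ^ m := by
      obtain ⟨r, rfl⟩ := Nat.exists_eq_add_of_le hm'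
      rw [Nat.add_sub_cancel_left, pow_add, mul_assoc, ← mul_pow]
      simp
    rw [← this]
    simp
    ring
  simp only [Finset.card_univ, Fintype.card_fin]
  rw [h2, abs_mul]
  simp

lemma tangent (d : ℕ) (hd : Odd d) (a x : ℝ) :
    x ^ (d+1) + (d+1) * (x ^ d * (a - x)) ≤ a ^ (d+1) := by
  have he : Even (d+1) := hd.add_one
  by_cases hx : x = 0
  · subst hx
    rw [zero_pow (by omega), zero_pow (by rcases hd with ⟨k, rfl⟩; omega)]
    simpa using he.pow_nonneg a
  have hx' : 0 < |x| := abs_pos.mpr hx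
  have h := one_add_mul_le_pow (a := |a|/|x| - 1) (by
    have : 0 ≤ |a|/|x| := by positivity
    linarith) (d+1)
  have h2 : |x|^(d+1) * (1 + ((d+1 : ℕ):ℝ) * (|a|/|x| - 1)) ≤ |x|^(d+1) * (1 + (|a|/|x| - 1))^(d+1) := by
    gcongr
  have e1 : |x|^(d+1) * (1 + (|a|/|x| - 1))^(d+1) = a^(d+1) := by
    rw [← he.pow_abs a, ← mul_pow]; congr 1; field_simp; ring
  have e2 : |x|^(d+1) * (1 + ((d+1 : ℕ):ℝ) * (|a|/|x| - 1))
      = x^(d+1) + (d+1) * (|x|^d * |a| - x^(d+1)) := by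
    rw [← he.pow_abs x]; push_cast; field_simp; ring
  have e3 : x^d * a ≤ |x|^d * |a| := by
    rw [← abs_pow, ← abs_mul]; exact le_abs_self _
  rw [e1, e2] at h2
  have : (d+1 : ℝ) * (x^d * a) ≤ (d+1) * (|x|^d * |a|) := by gcongr
  have e4 : x^(d+1) = x^d * x := pow_succ _ _
  nlinarith

lemma Gbound {ι : Type*} [Fintype ι] (d : ℕ) (hd : Odd d) (y z : ι → ℝ) (B τ : ℝ)
    (hB : 0 ≤ B) (hy : ∀ j, |y j| ≤ B) (hz : ∀ j, |z j| ≤ 1) (hτ : 0 < τ) (hτ1 : τ ≤ 1)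
    (H : ∀ t : ℝ, ∑ j, y j ^ (d+1) ≤ (1 + τ^2)^(d+1) * ∑ j, (y j + t * z j)^(d+1)) :
    |∑ j, z j * y j ^ d| ≤ τ * (Fintype.card ι * ((d+1) * (B+1)^(d+1))) := by
  have he : Even (d+1) := hd.add_one
  set N := ∑ j, y j ^ (d+1) with hN
  set m : ℝ := (Fintype.card ι : ℝ) with hm
  have hN0 : 0 ≤ N := Finset.sum_nonneg fun j _ => he.pow_nonneg _
  have hNB : N ≤ m * B^(d+1) := by
    rw [hN, hm, ← nsmul_eq_mul, ← Finset.card_univ]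
    refine Finset.sum_le_card_nsmul _ _ _ fun j _ => ?_
    rw [← he.pow_abs]; gcongr; exact hy j
  -- one-sided inequality
  have one : ∀ t : ℝ, |t| ≤ 1 →
      0 ≤ τ^2 * N + t * (∑ j, z j * y j ^ d) + t^2 * (m * (d * (B+1)^d)) := by
    intro t ht
    have h1 := H t
    set N' := ∑ j, (y j + t * z j)^(d+1) with hN'
    have hN'0 : 0 ≤ N' := Finset.sum_nonneg fun j _ => he.pow_nonneg _
    have h2 : (1 - (d+1) * τ^2) * N ≤ N' := by
      have b := one_add_mul_le_pow (a := -τ^2) (by nlinarith) (d+1)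
      have b2 : (1 + -τ^2)^(d+1) * (1+τ^2)^(d+1) ≤ 1 := by
        rw [← mul_pow]
        apply pow_le_one₀
        · exact mul_nonneg (by nlinarith) (by positivity)
        · nlinarith [sq_nonneg (τ^2)]
      have b3 : 0 ≤ (1 + -τ^2)^(d+1) := pow_nonneg (by nlinarith) _
      push_cast at b
      calc (1 - (d+1) * τ^2) * N ≤ (1 + -τ^2)^(d+1) * N := by
            apply mul_le_mul_of_nonneg_right _ hN0; linarith
        _ ≤ (1 + -τ^2)^(d+1) * ((1 + τ^2)^(d+1) * N') := by gcongr
        _ = ((1 + -τ^2)^(d+1) * (1 + τ^2)^(d+1)) * N' := by ring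
        _ ≤ 1 * N' := by gcongr
        _ = N' := one_mul _
    have h3 : N' - N ≤ (d+1) * ∑ j, t * z j * (y j + t * z j)^d := by
      rw [hN', hN, ← Finset.sum_sub_distrib, Finset.mul_sum]
      refine Finset.sum_le_sum fun j _ => ?_
      have := tangent d hd (y j) (y j + t * z j)
      nlinarith
    have h4 : ∑ j, t * z j * (y j + t * z j)^d ≤
        t * (∑ j, z j * y j ^ d) + t^2 * (m * (d * (B+1)^d)) := by
      have : t^2 * (m * (d * (B+1)^d)) = ∑ j : ι, t^2 * (d * (B+1)^d) := by
        simp [hm]; ring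
      rw [this, Finset.mul_sum, ← Finset.sum_add_distrib]
      refine Finset.sum_le_sum fun j _ => ?_
      have p := abs_pow_sub_pow_le (y j + t * z j) (y j) d
      have htz : |t * z j| ≤ |t| := by
        rw [abs_mul]; exact mul_le_of_le_one_right (abs_nonneg _) (hz j)
      have q1 : max |y j + t * z j| |y j| ≤ B + 1 := by
        apply max_le
        · calc _ ≤ |y j| + |t * z j| := abs_add_le _ _
            _ ≤ B + 1 := add_le_add (hy j) (htz.trans ht)
        · linarith [hy j]
      have q2 : |(y j + t * z j)^d - y j ^ d| ≤ |t| * d * (B+1)^d := by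
        refine p.trans ?_
        rw [add_sub_cancel_left]
        have : max |y j + t * z j| |y j| ^ (d-1) ≤ (B+1)^d :=
          calc _ ≤ (B+1)^(d-1) := by gcongr
            _ ≤ (B+1)^d := pow_le_pow_right₀ (by linarith) (by omega)
        gcongr
      have q3 : t * z j * ((y j + t * z j)^d - y j ^ d) ≤ t^2 * (d * (B+1)^d) := by
        refine (le_abs_self _).trans ?_
        rw [abs_mul]
        calc _ ≤ |t| * (|t| * d * (B+1)^d) := by gcongr
          _ = |t|^2 * (d * (B+1)^d) := by ring
          _ = _ := by rw [sq_abs]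
      linarith
    have hdp : (0:ℝ) < d + 1 := by positivity
    have h5 : 0 ≤ (d+1 : ℝ) * (τ^2 * N + ∑ j, t * z j * (y j + t * z j)^d) := by nlinarith
    have h6 := nonneg_of_mul_nonneg_right h5 hdp
    linarith
  have hm0 : 0 ≤ m := by positivity
  have tot : N + m * (d * (B+1)^d) ≤ m * ((d+1) * (B+1)^(d+1)) := by
    have c1 : B^(d+1) ≤ (B+1)^(d+1) := by gcongr; linarith
    have c2 : (B+1)^d ≤ (B+1)^(d+1) := pow_le_pow_right₀ (by linarith) (by omega)
    calc N + m * (d * (B+1)^d) ≤ m * (B+1)^(d+1) + m * (d * (B+1)^(d+1)) := by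
          refine add_le_add (hNB.trans ?_) ?_ <;> gcongr
      _ = _ := by ring
  have tot2 : τ^2 * (N + m * (d * (B+1)^d)) ≤ τ^2 * (m * ((d+1) * (B+1)^(d+1))) := by gcongr
  have u1 := one τ (by rw [abs_of_pos hτ]; exact hτ1)
  have u2 := one (-τ) (by rw [abs_neg, abs_of_pos hτ]; exact hτ1)
  have hfin : τ * |∑ j, z j * y j ^ d| ≤ τ * (τ * (m * ((d+1) * (B+1)^(d+1)))) := by
    rcases abs_cases (∑ j, z j * y j ^ d) with ⟨h, _⟩ | ⟨h, _⟩ <;> rw [h] <;> nlinarith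
  exact le_of_mul_le_mul_left hfin hτ

lemma comb_good {X : Type*} [AddCommGroup X] [Module ℝ X] (n : ℕ) (hn : 4 ≤ n)
    (f : X →ₗ[ℝ] ℝ) (c : Fin (n+2) → X →ₗ[ℝ] ℝ) (R : ℝ)
    (e : Finset (Fin (n+2)) → Fin (n+2) → X)
    (h1 : ∀ A, A.card = n → ∀ k ∈ A, c k (e A k) = 1)
    (h0 : ∀ A, A.card = n → ∀ k ∈ A, ∀ l ∈ A, l ≠ k → c l (e A k) = 0)
    (hR : ∀ A, A.card = n → ∀ k ∈ A, ∀ l, |c l (e A k)| ≤ R) :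
    ∃ A : Finset (Fin (n+2)), A.card = n ∧ ∀ i ∈ A, ∀ j, j ≠ i →
      ∃ v, f v = 0 ∧ c j v = 0 ∧ c i v = 1 ∧ ∀ l, |c l v| ≤ 2 * R := by
  classical
  set good : Fin (n+2) → Prop := fun i => ∀ j, j ≠ i →
      ∃ v, f v = 0 ∧ c j v = 0 ∧ c i v = 1 ∧ ∀ l, |c l v| ≤ 2 * R with hgood
  have bad : ∀ i, ¬ good i → ∃ j, j ≠ i ∧ ∀ A : Finset (Fin (n+2)), A.card = n → i ∈ A → j ∈ A →
      ∀ k ∈ A, k ≠ i → k ≠ j → |f (e A k)| < |f (e A i)| := by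
    intro i hi
    simp only [hgood] at hi
    push Not at hi
    obtain ⟨j, hj, H⟩ := hi
    refine ⟨j, hj, fun A hA hiA hjA k hkA hki hkj => ?_⟩
    by_contra hcon
    push Not at hcon
    set s := f (e A i) / f (e A k) with hs
    have hs1 : |s| ≤ 1 := by
      rw [hs, abs_div]
      exact div_le_one_of_le₀ hcon (abs_nonneg _)
    have hs2 : f (e A i) - s * f (e A k) = 0 := by
      by_cases h : f (e A k) = 0
      · have : f (e A i) = 0 := by
          rw [h, abs_zero] at hcon
          exact abs_eq_zero.mp (le_antisymm hcon (abs_nonneg _))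
        simp [h, this]
      · rw [hs]; field_simp; ring
    obtain ⟨l, hl⟩ := H (e A i - s • e A k) (by simpa using hs2)
      (by simp [h0 A hA i hiA j hjA hj, h0 A hA k hkA j hjA (Ne.symm hkj)])
      (by simp [h1 A hA i hiA, h0 A hA k hkA i hiA (Ne.symm hki)])
    have e1 := hR A hA i hiA l
    have e2 := hR A hA k hkA l
    have : |c l (e A i - s • e A k)| ≤ 2 * R := by
      simp only [map_sub, map_smul, smul_eq_mul]
      calc _ ≤ |c l (e A i)| + |s * c l (e A k)| := abs_sub _ _
        _ ≤ R + 1 * R := by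
          rw [abs_mul]
          gcongr
        _ = _ := by ring
    linarith
  -- the set of bad indices has at most two elements
  have hB : (Finset.univ.filter (fun i => ¬ good i)).card ≤ 2 := by
    by_contra hcon
    push Not at hcon
    obtain ⟨a, b, d, ha, hb, hd, hab, had, hbd⟩ := Finset.two_lt_card_iff.mp hcon
    simp only [Finset.mem_filter, Finset.mem_univ, true_and] at ha hb hd
    obtain ⟨ja, hja, Ha⟩ := bad a ha
    obtain ⟨jb, hjb, Hb⟩ := bad b hb
    obtain ⟨jd, hjd, Hd⟩ := bad d hd
    have key : ∀ i j i' j' : Fin (n+2),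
        ∃ A : Finset (Fin (n+2)), A.card = n ∧ i ∈ A ∧ j ∈ A ∧ i' ∈ A ∧ j' ∈ A := by
      intro i j i' j'
      obtain ⟨A, hA, hc⟩ := Finset.exists_superset_card_eq (s := ({i, j, i', j'} : Finset (Fin (n+2))))
        (n := n) (le_trans Finset.card_le_four hn) (by simp)
      refine ⟨A, hc, ?_, ?_, ?_, ?_⟩ <;> apply hA <;> simp
    have pair : ∀ i j i' j' : Fin (n+2), i ≠ i' →
        (∀ A : Finset (Fin (n+2)), A.card = n → i ∈ A → j ∈ A →
          ∀ k ∈ A, k ≠ i → k ≠ j → |f (e A k)| < |f (e A i)|) →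
        (∀ A : Finset (Fin (n+2)), A.card = n → i' ∈ A → j' ∈ A →
          ∀ k ∈ A, k ≠ i' → k ≠ j' → |f (e A k)| < |f (e A i')|) → i = j' ∨ i' = j := by
      intro i j i' j' hne H H'
      by_contra hcon
      push Not at hcon
      obtain ⟨A, hA, m1, m2, m3, m4⟩ := key i j i' j'
      have := H A hA m1 m2 i' m3 hne.symm hcon.2
      have := H' A hA m3 m4 i m1 hne hcon.1
      linarith
    have pab := pair a ja b jb hab Ha Hb
    have pad := pair a ja d jd had Ha Hd
    have pbd := pair b jb d jd hbd Hb Hd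
    obtain ⟨A, hA, m1, m2, m3, -⟩ := key a b d d
    have cyc : (ja = b ∧ jb = d ∧ jd = a) ∨ (jb = a ∧ ja = d ∧ jd = b) := by grind
    rcases cyc with ⟨q1, q2, q3⟩ | ⟨q1, q2, q3⟩
    · have x1 := Ha A hA m1 (q1 ▸ m2) d m3 had.symm (by rw [q1]; exact hbd.symm)
      have x2 := Hb A hA m2 (q2 ▸ m3) a m1 hab (by rw [q2]; exact had)
      have x3 := Hd A hA m3 (q3 ▸ m1) b m2 hbd (by rw [q3]; exact hab.symm)
      linarith
    · have x1 := Ha A hA m1 (q2 ▸ m3) b m2 hab.symm (by rw [q2]; exact hbd)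
      have x2 := Hb A hA m2 (q1 ▸ m1) d m3 hbd.symm (by rw [q1]; exact had.symm)
      have x3 := Hd A hA m3 (q3 ▸ m2) a m1 had (by rw [q3]; exact hab)
      linarith
  have hG : n ≤ (Finset.univ.filter good).card := by
    have := Finset.card_filter_add_card_filter_not (s := (Finset.univ : Finset (Fin (n+2)))) good
    simp only [Finset.card_univ, Fintype.card_fin] at this
    omega
  obtain ⟨A, hA, hc⟩ := Finset.exists_subset_card_eq hG
  exact ⟨A, hc, fun i hi => (Finset.mem_filter.mp (hA hi)).2⟩

lemma index_bound {X : Type*} [AddCommGroup X] [Module ℝ X] (m d : ℕ) (hm : 2 ≤ m) (hmd : m ≤ d)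
    (hd : Odd d) (f : X →ₗ[ℝ] ℝ) (c : Fin m → X →ₗ[ℝ] ℝ) (R τ : ℝ) (hR0 : 0 ≤ R)
    (hτ : 0 < τ) (hτ1 : τ ≤ 1) (z : X) (hz : ∀ l, |c l z| ≤ 1) (i : Fin m)
    (hi : ∀ j, j ≠ i → ∃ v, f v = 0 ∧ c j v = 0 ∧ c i v = 1 ∧ ∀ l, |c l v| ≤ R)
    (H : ∀ y, f y = 0 → ∀ t : ℝ,
      ∑ j, c j y ^ (d+1) ≤ (1 + τ^2)^(d+1) * ∑ j, (c j y + t * c j z)^(d+1)) :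
    |c i z| ≤ 2^d * (τ * (m * ((d+1) * (d * R + 1)^(d+1)))) := by
  classical
  have : Nontrivial (Fin m) := Fin.nontrivial_iff_two_le.mpr hm
  have hw : ∀ j, ∃ v, f v = 0 ∧ (j ≠ i → c j v = 0) ∧ c i v = 1 ∧ ∀ l, |c l v| ≤ R := by
    intro j
    by_cases hj : j = i
    · obtain ⟨j', hj'⟩ := exists_ne i
      obtain ⟨v, h1, h2, h3, h4⟩ := hi j' hj'
      exact ⟨v, h1, fun h => absurd hj h, h3, h4⟩
    · obtain ⟨v, h1, h2, h3, h4⟩ := hi j hj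
      exact ⟨v, h1, fun _ => h2, h3, h4⟩
  choose w hwf hwj hwi hwR using hw
  let g : Fin d → Fin m := fun k => if h : k.1 < m then ⟨k.1, h⟩ else i
  have hg : ∀ j : Fin m, ∃ k, g k = j := fun j =>
    ⟨⟨j.1, by omega⟩, by simp [g]⟩
  let Y : Finset (Fin d) → X := fun S => ∑ k ∈ S, w (g k)
  have hYf : ∀ S, f (Y S) = 0 := fun S => by simp [Y, hwf]
  have hYB : ∀ S l, |c l (Y S)| ≤ d * R := by
    intro S l
    simp only [Y, map_sum]
    calc _ ≤ ∑ k ∈ S, |c l (w (g k))| := Finset.abs_sum_le_sum_abs _ _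
      _ ≤ ∑ k ∈ S, R := Finset.sum_le_sum fun k _ => hwR _ _
      _ = S.card * R := by simp
      _ ≤ d * R := by
        gcongr
        simpa using Finset.card_le_univ S
  have hG : ∀ S, |∑ j, c j z * c j (Y S) ^ d| ≤ τ * (m * ((d+1) * (d * R + 1)^(d+1))) := by
    intro S
    have := Gbound d hd (fun j => c j (Y S)) (fun j => c j z) (d * R) τ (by positivity)
      (hYB S) hz hτ hτ1 (H _ (hYf S))
    simpa using this
  have hT : ∑ S ∈ (Finset.univ : Finset (Fin d)).powerset,
      (-1 : ℝ)^S.card * ∑ j, c j z * c j (Y S) ^ d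
      = c i z * ∑ S ∈ (Finset.univ : Finset (Fin d)).powerset, (-1 : ℝ)^S.card * (S.card : ℝ)^d := by
    simp only [Finset.mul_sum]
    rw [Finset.sum_comm, Finset.sum_eq_single i]
    · refine Finset.sum_congr rfl fun S _ => ?_
      have : c i (Y S) = S.card := by simp [Y, hwi]
      rw [this]; ring
    · intro j _ hj
      obtain ⟨k, hk⟩ := hg j
      have := polar_zero (fun k => c j (w (g k))) k (by rw [hk]; exact hwj j hj) d
      calc _ = c j z * ∑ S ∈ (Finset.univ : Finset (Fin d)).powerset,
            (-1 : ℝ) ^ S.card * (∑ k ∈ S, c j (w (g k))) ^ d := by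
            rw [Finset.mul_sum]
            refine Finset.sum_congr rfl fun S _ => ?_
            simp only [Y, map_sum]; ring
        _ = 0 := by rw [this, mul_zero]
    · simp
  have hfac : (1 : ℝ) ≤ d.factorial := by exact_mod_cast Nat.factorial_pos d
  calc |c i z| ≤ |c i z| * d.factorial := le_mul_of_one_le_right (abs_nonneg _) hfac
    _ = |∑ S ∈ (Finset.univ : Finset (Fin d)).powerset,
      (-1 : ℝ)^S.card * ∑ j, c j z * c j (Y S) ^ d| := by rw [hT, abs_mul, polar_one]
    _ ≤ ∑ S ∈ (Finset.univ : Finset (Fin d)).powerset,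
      |(-1 : ℝ)^S.card * ∑ j, c j z * c j (Y S) ^ d| := Finset.abs_sum_le_sum_abs _ _
    _ ≤ ∑ S ∈ (Finset.univ : Finset (Fin d)).powerset,
        τ * (m * ((d+1) * (d * R + 1)^(d+1))) := by
      refine Finset.sum_le_sum fun S _ => ?_
      rw [abs_mul, abs_pow, abs_neg, abs_one, one_pow, one_mul]
      exact hG S
    _ = _ := by simp

lemma expo_lt (n : ℕ) :
    1 + (n+3) + (2*n+3) + 1 + 1 + (n+4)*(2*n+3+1) < 50 * (n+3)^2 := by
  nlinarith

lemma inv_pow_aux (K : ℝ) (a : ℕ) : (K ^ (100 * a))⁻¹ = ((K ^ (50 * a))⁻¹) ^ 2 := by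
  rw [inv_pow, ← pow_mul]
  congr 2
  ring

/-- Numerical estimate. -/
lemma numeric (n : ℕ) (hn : 4 ≤ n) :
    (n : ℝ) * ((n : ℝ)+3)^(n+3) * (2^(2*n+3) * ((((2 * ((n : ℝ) + 3) ^ 2) ^ (50 * (n + 3) ^ 2))⁻¹) *
      (((n+2 : ℕ) : ℝ) * ((((2*n+3 : ℕ) : ℝ)+1) *
        (((2*n+3 : ℕ) : ℝ) * (2 * ((n : ℝ)+3)^(n+3)) + 1)^(2*n+3+1))))) < 1 := by
  set N : ℝ := (n : ℝ) + 3 with hN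
  have hn' : (4 : ℝ) ≤ n := by exact_mod_cast hn
  have hN7 : 7 ≤ N := by linarith
  set K : ℝ := 2 * N^2 with hK
  have hNK : N ≤ K := by nlinarith
  have hK1 : 1 ≤ K := by linarith
  have hR : N^(n+3) ≤ K^(n+3) := by gcongr
  have hR1 : 1 ≤ N^(n+3) := one_le_pow₀ (by linarith)
  have a1 : (n : ℝ) ≤ K := by linarith
  have a2 : (2 : ℝ)^(2*n+3) ≤ K^(2*n+3) := by gcongr; linarith
  have a3 : ((n+2 : ℕ) : ℝ) ≤ K := by push_cast; linarith
  have a4 : ((2*n+3 : ℕ) : ℝ)+1 ≤ K := by push_cast; nlinarith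
  have a5 : ((2*n+3 : ℕ) : ℝ) * (2 * N^(n+3)) + 1 ≤ K^(n+4) := by
    calc _ ≤ (2 * ((2*n+3 : ℕ) : ℝ) + 1) * N^(n+3) := by nlinarith
      _ ≤ K * K^(n+3) := by
        gcongr
        push_cast; nlinarith
      _ = _ := by ring
  have a6 : (((2*n+3 : ℕ) : ℝ) * (2 * N^(n+3)) + 1)^(2*n+3+1) ≤ (K^(n+4))^(2*n+3+1) := by gcongr
  set T := K^(50 * (n+3)^2) with hT
  have hT0 : 0 < T := by positivity
  calc _ ≤ K * K^(n+3) * (K^(2*n+3) * (T⁻¹ * (K * (K * (K^(n+4))^(2*n+3+1))))) := by gcongr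
    _ = K^(1 + (n+3) + (2*n+3) + 1 + 1 + (n+4)*(2*n+3+1)) * T⁻¹ := by
      rw [← pow_mul]
      generalize (n+4)*(2*n+3+1) = E
      generalize 2*n+3 = b
      generalize n+3 = a
      generalize T⁻¹ = U
      rw [pow_add, pow_add, pow_add, pow_add, pow_add]
      ring
    _ < T * T⁻¹ := by
      gcongr
      rw [hT]
      exact pow_lt_pow_right₀ (by linarith) (expo_lt n)
    _ = 1 := mul_inv_cancel₀ hT0.ne'

theorem core_abs (n d : ℕ) (hn : 4 ≤ n) (hnd : n + 2 ≤ d) (hd : Odd d)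
    (X : Type) [NormedAddCommGroup X] [NormedSpace ℝ X]
    (hfr : Module.finrank ℝ X = n) (c : Fin (n+2) → X →ₗ[ℝ] ℝ)
    (hnorm : ∀ x, ‖x‖ ^ (d+1) = ∑ j, c j x ^ (d+1))
    (e : Finset (Fin (n+2)) → Fin (n+2) → X) (R τ δ : ℝ) (hR0 : 0 ≤ R) (hτ : 0 < τ) (hτ1 : τ ≤ 1)
    (hδ : δ = 2^d * (τ * (((n+2 : ℕ) : ℝ) * ((d+1) * (d * (2 * R) + 1)^(d+1)))))
    (hnum : n * R * δ < 1)
    (h1 : ∀ A, A.card = n → ∀ k ∈ A, c k (e A k) = 1)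
    (h0 : ∀ A, A.card = n → ∀ k ∈ A, ∀ l ∈ A, l ≠ k → c l (e A k) = 0)
    (hR : ∀ A, A.card = n → ∀ k ∈ A, ∀ l, |c l (e A k)| ≤ R)
    (hexp : ∀ A, A.card = n → ∀ x l, c l x = ∑ k ∈ A, c k x * c l (e A k))
    (Y : Submodule ℝ X) (hY : Module.finrank ℝ Y = n - 1) (P : X →L[ℝ] X)
    (hPY : ∀ x, P x ∈ Y) (hPid : ∀ y ∈ Y, P y = y) : 1 + τ^2 < ‖P‖ := by
  by_contra hcon
  push Not at hcon
  have : FiniteDimensional ℝ X := Module.finite_of_finrank_pos (by omega)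
  have hYtop : Y < ⊤ := by
    rw [lt_top_iff_ne_top]
    rintro rfl
    rw [finrank_top] at hY
    omega
  obtain ⟨f, hf0, hYf⟩ := Submodule.exists_le_ker_of_lt_top Y hYtop
  have hker : Y = LinearMap.ker f := by
    apply Submodule.eq_of_le_of_finrank_le hYf
    have hlt : Module.finrank ℝ (LinearMap.ker f) < Module.finrank ℝ X := by
      apply Submodule.finrank_lt
      intro h
      exact hf0 (LinearMap.ker_eq_top.mp h)
    omega
  -- the kernel direction
  obtain ⟨x, -, hx⟩ := SetLike.exists_of_lt hYtop
  set z0 := x - P x with hz0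
  have hPz0 : P z0 = 0 := by
    rw [hz0, map_sub, hPid _ (hPY x), sub_self]
  have hz0ne : z0 ≠ 0 := by
    intro h
    apply hx
    rw [sub_eq_zero.mp h]
    exact hPY x
  obtain ⟨l0, -, hl0⟩ := Finset.exists_max_image (Finset.univ : Finset (Fin (n+2)))
    (fun l => |c l z0|) Finset.univ_nonempty
  have hpos : 0 < |c l0 z0| := by
    rw [abs_pos]
    intro hzero
    apply hz0ne
    have hall : ∀ l, c l z0 = 0 := fun l => by
      have := hl0 l (Finset.mem_univ _)
      rw [hzero, abs_zero] at this
      exact abs_eq_zero.mp (le_antisymm this (abs_nonneg _))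
    have hh := hnorm z0
    simp only [hall] at hh
    simp at hh
    exact hh
  set z := (|c l0 z0|)⁻¹ • z0 with hz
  have hPz : P z = 0 := by rw [hz, map_smul, hPz0, smul_zero]
  have hz1 : ∀ l, |c l z| ≤ 1 := fun l => by
    rw [hz, map_smul, smul_eq_mul, abs_mul, abs_inv, abs_abs, inv_mul_le_iff₀ hpos, mul_one]
    exact hl0 l (Finset.mem_univ _)
  have hz1' : |c l0 z| = 1 := by
    rw [hz, map_smul, smul_eq_mul, abs_mul, abs_inv, abs_abs, inv_mul_cancel₀ hpos.ne']
  obtain ⟨A, hA, hgood⟩ := comb_good n hn f c R e h1 h0 hR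
  have hsmall := fun i hi => index_bound (n+2) d (by omega) hnd hd f c (2*R) τ
    (by positivity) hτ hτ1 z hz1 i (hgood i hi) (by
      intro y hy t
      have hyY : y ∈ Y := by rw [hker]; exact hy
      have e1 : P (y + t • z) = y := by rw [map_add, map_smul, hPz, hPid y hyY]; simp
      have e2 : ‖y‖ ≤ (1+τ^2) * ‖y + t • z‖ := by
        calc ‖y‖ = ‖P (y + t • z)‖ := by rw [e1]
          _ ≤ ‖P‖ * ‖y + t • z‖ := P.le_opNorm _
          _ ≤ _ := by gcongr
      have e3 := pow_le_pow_left₀ (norm_nonneg y) e2 (d+1)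
      rw [mul_pow, hnorm, hnorm] at e3
      simpa using e3)
  have hδ0 : 0 ≤ δ := by rw [hδ]; positivity
  have : |c l0 z| ≤ n * R * δ := by
    rw [hexp A hA z l0]
    calc _ ≤ ∑ k ∈ A, |c k z * c l0 (e A k)| := Finset.abs_sum_le_sum_abs _ _
      _ ≤ ∑ k ∈ A, δ * R := by
        refine Finset.sum_le_sum fun k hk => ?_
        rw [abs_mul]
        exact mul_le_mul ((hsmall k hk).trans_eq hδ.symm) (hR A hA k hk l0) (abs_nonneg _) hδ0
      _ = n * R * δ := by rw [Finset.sum_const, hA, nsmul_eq_mul, mul_comm δ R, mul_assoc]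
  linarith

theorem core_space (n : ℕ) (hn : 4 ≤ n) (X : Type) [NormedAddCommGroup X] [NormedSpace ℝ X]
    (hfr : Module.finrank ℝ X = n) (c : Fin (n+2) → X →ₗ[ℝ] ℝ)
    (hnorm : ∀ x, ‖x‖ ^ (2*n+3+1) = ∑ j, c j x ^ (2*n+3+1))
    (e : Finset (Fin (n+2)) → Fin (n+2) → X)
    (h1 : ∀ A, A.card = n → ∀ k ∈ A, c k (e A k) = 1)
    (h0 : ∀ A, A.card = n → ∀ k ∈ A, ∀ l ∈ A, l ≠ k → c l (e A k) = 0)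
    (hR : ∀ A, A.card = n → ∀ k ∈ A, ∀ l, |c l (e A k)| ≤ ((n : ℝ)+3)^(n+3))
    (hexp : ∀ A, A.card = n → ∀ x l, c l x = ∑ k ∈ A, c k x * c l (e A k)) :
    NoAlmostMinimalHyperplaneProjection n X := by
  refine ⟨hfr, fun Y hY P hPY hPid => ?_⟩
  have hn0 : (0:ℝ) ≤ n := Nat.cast_nonneg n
  have hK : (1:ℝ) ≤ 2 * ((n : ℝ) + 3) ^ 2 := by nlinarith
  have hK2 : (1:ℝ) ≤ (2 * ((n : ℝ) + 3) ^ 2) ^ (50 * (n + 3) ^ 2) := one_le_pow₀ hK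
  have hnum := numeric n hn
  have hR0 : (0:ℝ) ≤ ((n : ℝ)+3)^(n+3) := pow_nonneg (by linarith) _
  have hinv := inv_pow_aux (2 * ((n : ℝ) + 3) ^ 2) ((n+3)^2)
  rw [hinv]
  clear hinv
  generalize (2 * ((n : ℝ) + 3) ^ 2) ^ (50 * (n + 3) ^ 2) = T at *
  generalize ((n : ℝ)+3)^(n+3) = R at *
  have hodd : Odd (2*n+3) := ⟨n+1, by ring⟩
  have hle : n + 2 ≤ 2*n+3 := by omega
  generalize 2*n+3 = d at *
  exact core_abs n d hn hle hodd X hfr c hnorm e R T⁻¹ _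
    hR0 (inv_pos.mpr (by linarith)) (inv_le_one_of_one_le₀ hK2) rfl
    hnum h1 h0 hR hexp Y hY P hPY hPid

/-- The space of polynomials of degree `< n`, evaluated at the nodes `0, …, n+1`. -/
noncomputable def evalMap (n : ℕ) :
    Polynomial.degreeLT ℝ n →ₗ[ℝ] PiLp ((2*n+3+1 : ℕ) : ENNReal) (fun _ : Fin (n+2) => ℝ) :=
  (WithLp.linearEquiv ((2*n+3+1 : ℕ) : ENNReal) ℝ (Fin (n+2) → ℝ)).symm.toLinearMap ∘ₗ
    LinearMap.pi (fun i => (Polynomial.leval ((i : ℕ) : ℝ)) ∘ₗ (Polynomial.degreeLT ℝ n).subtype)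

lemma evalMap_apply (n : ℕ) (p : Polynomial.degreeLT ℝ n) (i : Fin (n+2)) :
    evalMap n p i = (p : Polynomial ℝ).eval ((i : ℕ) : ℝ) := rfl

lemma nodes_inj (n : ℕ) (s : Set (Fin (n+2))) :
    Set.InjOn (fun i : Fin (n+2) => ((i : ℕ) : ℝ)) s := by
  intro a _ b _ h
  have h' : ((a : ℕ) : ℝ) = ((b : ℕ) : ℝ) := h
  exact Fin.ext (Nat.cast_injective h')

lemma evalMap_inj (n : ℕ) : Function.Injective (evalMap n) := by
  rw [← LinearMap.ker_eq_bot, LinearMap.ker_eq_bot']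
  intro p hp
  have hdeg : (p : Polynomial ℝ).degree < n := Polynomial.mem_degreeLT.mp p.2
  apply Subtype.ext
  apply Polynomial.eq_zero_of_degree_lt_of_eval_index_eq_zero Finset.univ
    (nodes_inj n _)
  · refine hdeg.trans_le ?_
    simp only [Finset.card_univ, Fintype.card_fin]
    exact_mod_cast Nat.le_add_right n 2
  · intro i _
    rw [← evalMap_apply, hp]; rfl

lemma basis_bound (n : ℕ) (A : Finset (Fin (n+2))) (hA : A.card = n) (k : Fin (n+2)) (hk : k ∈ A)
    (l : Fin (n+2)) :
    |(Lagrange.basis A (fun i : Fin (n+2) => ((i : ℕ) : ℝ)) k).eval ((l : ℕ) : ℝ)|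
      ≤ ((n : ℝ)+3)^(n+3) := by
  have hn1 : (1 : ℝ) ≤ (n : ℝ) + 3 := by linarith [(Nat.cast_nonneg n : (0:ℝ) ≤ n)]
  rw [Lagrange.basis, Polynomial.eval_prod, Finset.abs_prod]
  calc _ ≤ ∏ _j ∈ A.erase k, ((n : ℝ)+3) := by
        refine Finset.prod_le_prod (fun _ _ => abs_nonneg _) fun j hj => ?_
        have hjk : j ≠ k := (Finset.mem_erase.mp hj).1
        simp only [Lagrange.basisDivisor, Polynomial.eval_mul, Polynomial.eval_C,
          Polynomial.eval_sub, Polynomial.eval_X, abs_mul, abs_inv]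
        have d1 : (1 : ℝ) ≤ |((k : ℕ) : ℝ) - ((j : ℕ) : ℝ)| := by
          have : (1 : ℤ) ≤ |((k : ℕ) : ℤ) - ((j : ℕ) : ℤ)| := by
            apply Int.one_le_abs
            intro h
            apply hjk
            apply Fin.ext
            omega
          exact_mod_cast this
        have d2 : |((l : ℕ) : ℝ) - ((j : ℕ) : ℝ)| ≤ (n : ℝ) + 3 := by
          have : |((l : ℕ) : ℤ) - ((j : ℕ) : ℤ)| ≤ (n : ℤ) + 3 := by
            rw [abs_le]; omega
          exact_mod_cast this
        calc _ ≤ 1 * ((n : ℝ)+3) := by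
              gcongr
              exact inv_le_one_of_one_le₀ d1
          _ = _ := one_mul _
    _ = ((n : ℝ)+3)^(n-1) := by rw [Finset.prod_const, Finset.card_erase_of_mem hk, hA]
    _ ≤ _ := pow_le_pow_right₀ hn1 (by omega)

instance fact_exponent (n : ℕ) : Fact ((1 : ENNReal) ≤ ((2*n+3+1 : ℕ) : ENNReal)) :=
  ⟨by exact_mod_cast Nat.le_add_left 1 (2*n+3)⟩

/-- Corollary 1.2: for every `n ≥ 4` there is an `n`-dimensional normed space all of whose
projections onto hyperplanes have norm greater than `1 + (2(n+3)²)^{-100(n+3)²}`. -/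
theorem exists_space_with_large_hyperplane_projections (n : ℕ) (hn : 4 ≤ n) :
    ∃ (X : Type) (g : NormedAddCommGroup X)
      (s : @NormedSpace ℝ X _ g.toSeminormedAddCommGroup),
      @NoAlmostMinimalHyperplaneProjection n X g s := by
  classical
  refine ⟨LinearMap.range (evalMap n), inferInstance, inferInstance, ?_⟩
  let v : Fin (n+2) → ℝ := fun i => ((i : ℕ) : ℝ)
  have hbasis : ∀ A : Finset (Fin (n+2)), A.card = n → ∀ k ∈ A,
      Lagrange.basis A v k ∈ Polynomial.degreeLT ℝ n := by
    intro A hA k hk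
    rw [Polynomial.mem_degreeLT, Lagrange.degree_basis (nodes_inj n _) hk, hA]
    exact_mod_cast Nat.sub_lt (by omega) one_pos
  let e : Finset (Fin (n+2)) → Fin (n+2) → LinearMap.range (evalMap n) := fun A k =>
    if h : A.card = n ∧ k ∈ A then
      ⟨evalMap n ⟨Lagrange.basis A v k, hbasis A h.1 k h.2⟩, LinearMap.mem_range_self _ _⟩
    else 0
  let c : Fin (n+2) → LinearMap.range (evalMap n) →ₗ[ℝ] ℝ := fun j =>
    { toFun := fun x => x.1 j
      map_add' := fun _ _ => rfl
      map_smul' := fun _ _ => rfl }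
  have hce : ∀ A, A.card = n → ∀ k ∈ A, ∀ l, c l (e A k) = (Lagrange.basis A v k).eval (v l) := by
    intro A hA k hk l
    have : e A k = ⟨evalMap n ⟨Lagrange.basis A v k, hbasis A hA k hk⟩,
        LinearMap.mem_range_self _ _⟩ := dif_pos ⟨hA, hk⟩
    rw [this]; rfl
  refine core_space n hn _ ?_ c ?_ e ?_ ?_ ?_ ?_
  · rw [LinearMap.finrank_range_of_inj (evalMap_inj n),
      (Polynomial.degreeLTEquiv ℝ n).finrank_eq]
    simp
  · intro x
    have hev : Even (2*n+3+1) := ⟨n+2, by ring⟩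
    have h := PiLp.norm_eq_of_nat (2*n+3+1) rfl x.1
    have h2 : ‖x‖ = ‖x.1‖ := rfl
    have hs : 0 ≤ ∑ i, ‖x.1 i‖ ^ (2*n+3+1) := Finset.sum_nonneg fun _ _ => by positivity
    rw [h2, h, ← Real.rpow_natCast, ← Real.rpow_mul hs, one_div,
      inv_mul_cancel₀ (by positivity), Real.rpow_one]
    refine Finset.sum_congr rfl fun i _ => ?_
    rw [Real.norm_eq_abs, hev.pow_abs]; rfl
  · intro A hA k hk
    rw [hce A hA k hk]
    exact Lagrange.eval_basis_self (nodes_inj n _) hk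
  · intro A hA k hk l hl hne
    rw [hce A hA k hk]
    exact Lagrange.eval_basis_of_ne hne.symm hl
  · intro A hA k hk l
    rw [hce A hA k hk]
    exact basis_bound n A hA k hk l
  · rintro A hA ⟨_, p, rfl⟩ l
    have hdeg : (p : Polynomial ℝ).degree < A.card := by
      rw [hA]; exact Polynomial.mem_degreeLT.mp p.2
    have hint := Lagrange.eq_interpolate (v := v) (nodes_inj n A) hdeg
    have : (p : Polynomial ℝ).eval (v l) =
        ∑ k ∈ A, (p : Polynomial ℝ).eval (v k) * (Lagrange.basis A v k).eval (v l) := by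
      conv_lhs => rw [hint, Lagrange.interpolate_apply, Polynomial.eval_finsetSum]
      simp
    calc _ = (p : Polynomial ℝ).eval (v l) := rfl
      _ = _ := this
      _ = _ := Finset.sum_congr rfl fun k hk => by rw [hce A hA k hk]; rfl
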